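/- A nonnegative semi-convex function u on [0,1] satisfies the differential inequality u'' ≤ −(K/N)θ² u in the distributional sense if and only if it satisfies the integrated concavity inequality u(t) ≥ σ^{(1−t)}_{K/N}(θ) u(0) + σ^{(t)}_{K/N}(θ) u(1) along with the corresponding inequality on every subinterval, where σ^{(t)}_κ(θ) is the distortion coefficient defined via sin/sinh. -/

import Mathlib

open MeasureTheory Classical

/-- The comparison function `𝔰_κ`: `sin(√κ θ)/√κ` for `κ > 0`, `θ` for `κ = 0`, and
`sinh(√−κ θ)/√−κ` for `κ < 0`. -/
noncomputable def sK (κ θ : ℝ) : ℝ :=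
  if 0 < κ then Real.sin (Real.sqrt κ * θ) / Real.sqrt κ
  else if κ = 0 then θ
  else Real.sinh (Real.sqrt (-κ) * θ) / Real.sqrt (-κ)

/-- The distortion coefficient `σ^{(t)}_κ(θ) = 𝔰_κ(tθ)/𝔰_κ(θ)` (equal to `t` when `κθ² = 0`). -/
noncomputable def sigmaR (κ t θ : ℝ) : ℝ :=
  if κ * θ ^ 2 = 0 then t else sK κ (t * θ) / sK κ θ

/-!
Write `v'' + κ v = 0` for the comparison equation; its solutions are spanned by `sK κ` and
`cK κ`, and as long as `κ (b - a)² ≤ π²` the function `sK κ` is nonnegative on `[0, b - a]`.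

A `C²` function with `w'' ≤ -κ w` lies above the solution with the same boundary values: its
Wronskian with `sK κ (· - a)` decreases, its Wronskian with `sK κ (b - ·)` increases, and the
addition formula for `sK κ` combines the two bounds. The distributional inequality passes to the
mollifications of `u`, which are smooth, and the resulting comparison passes to the limit.

Conversely, the comparison on `[x - h, x + h]` at the midpoint says that the second difference
quotient of `u` at `x` is at most `u x` times that of `cK κ` at `0`, which tends to `-κ`. Against
a test function the second difference can be moved from `u` to `φ`, where it tends to `φ''`.
-/

open Filter Set Topology Convolution
open scoped Real

/-! ### The comparison functions -/

/-- The companion of `sK`, i.e. the solution of `v'' + κ v = 0` with `v 0 = 1` and `v' 0 = 0`: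
a cosine, a constant or a hyperbolic cosine according to the sign of `κ`. -/
noncomputable def cK (κ x : ℝ) : ℝ :=
  if 0 < κ then Real.cos (√κ * x)
  else if κ = 0 then 1
  else Real.cosh (√(-κ) * x)

section ComparisonFunctions

variable {κ : ℝ}

lemma sK_of_pos (hκ : 0 < κ) (x : ℝ) : sK κ x = Real.sin (√κ * x) / √κ := if_pos hκ

lemma sK_of_zero (x : ℝ) : sK 0 x = x := by simp [sK]

lemma sK_of_neg (hκ : κ < 0) (x : ℝ) : sK κ x = Real.sinh (√(-κ) * x) / √(-κ) := by
  simp [sK, hκ.not_gt, hκ.ne]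

lemma cK_of_pos (hκ : 0 < κ) (x : ℝ) : cK κ x = Real.cos (√κ * x) := if_pos hκ

lemma cK_of_zero (x : ℝ) : cK 0 x = 1 := by simp [cK]

lemma cK_of_neg (hκ : κ < 0) (x : ℝ) : cK κ x = Real.cosh (√(-κ) * x) := by
  simp [cK, hκ.not_gt, hκ.ne]

variable (κ)

@[simp]
lemma sK_zero_right : sK κ 0 = 0 := by
  unfold sK; split_ifs <;> simp

@[simp]
lemma cK_zero_right : cK κ 0 = 1 := by
  unfold cK; split_ifs <;> simp

@[simp]
lemma sK_neg_right (x : ℝ) : sK κ (-x) = -sK κ x := by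
  unfold sK; split_ifs <;> simp [neg_div]

@[simp]
lemma cK_neg_right (x : ℝ) : cK κ (-x) = cK κ x := by
  unfold cK; split_ifs <;> simp

lemma sK_add (x y : ℝ) : sK κ (x + y) = sK κ x * cK κ y + cK κ x * sK κ y := by
  unfold sK cK
  split_ifs
  · rw [mul_add, Real.sin_add]; ring
  · ring
  · rw [mul_add, Real.sinh_add]; ring

lemma hasDerivAt_sK (x : ℝ) : HasDerivAt (sK κ) (cK κ x) x := by
  rcases lt_trichotomy κ 0 with hκ | rfl | hκ
  · have hne : √(-κ) ≠ 0 := (Real.sqrt_pos.2 (neg_pos.2 hκ)).ne'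
    rw [funext (sK_of_neg hκ), cK_of_neg hκ]
    simpa [hne] using ((hasDerivAt_id' x).const_mul √(-κ)).sinh.div_const √(-κ)
  · rw [funext sK_of_zero, cK_of_zero]
    exact hasDerivAt_id' x
  · have hne : √κ ≠ 0 := (Real.sqrt_pos.2 hκ).ne'
    rw [funext (sK_of_pos hκ), cK_of_pos hκ]
    simpa [hne] using ((hasDerivAt_id' x).const_mul √κ).sin.div_const √κ

lemma hasDerivAt_cK (x : ℝ) : HasDerivAt (cK κ) (-κ * sK κ x) x := by
  rcases lt_trichotomy κ 0 with hκ | rfl | hκ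
  · have hne : √(-κ) ≠ 0 := (Real.sqrt_pos.2 (neg_pos.2 hκ)).ne'
    rw [funext (cK_of_neg hκ), sK_of_neg hκ]
    refine ((hasDerivAt_id' x).const_mul √(-κ)).cosh.congr_deriv ?_
    field_simp
    rw [Real.sq_sqrt (neg_pos.2 hκ).le]
    ring
  · rw [funext cK_of_zero, neg_zero, zero_mul]
    exact hasDerivAt_const x 1
  · have hne : √κ ≠ 0 := (Real.sqrt_pos.2 hκ).ne'
    rw [funext (cK_of_pos hκ), sK_of_pos hκ]
    refine ((hasDerivAt_id' x).const_mul √κ).cos.congr_deriv ?_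
    field_simp
    rw [Real.sq_sqrt hκ.le]
    ring

@[fun_prop]
lemma continuous_sK : Continuous (sK κ) :=
  continuous_iff_continuousAt.2 fun x => (hasDerivAt_sK κ x).continuousAt

@[fun_prop]
lemma continuous_cK : Continuous (cK κ) :=
  continuous_iff_continuousAt.2 fun x => (hasDerivAt_cK κ x).continuousAt

lemma sK_mul_right_of_pos {θ : ℝ} (hθ : 0 < θ) (x : ℝ) :
    sK κ (x * θ) = θ * sK (κ * θ ^ 2) x := by
  have hsq : 0 < θ ^ 2 := by positivity
  rcases lt_trichotomy κ 0 with hκ | rfl | hκ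
  · have hne : √(-κ) ≠ 0 := (Real.sqrt_pos.2 (neg_pos.2 hκ)).ne'
    rw [sK_of_neg hκ, sK_of_neg (mul_neg_of_neg_of_pos hκ hsq), ← neg_mul,
      Real.sqrt_mul (neg_pos.2 hκ).le, Real.sqrt_sq hθ.le, mul_comm x, ← mul_assoc]
    field_simp
  · rw [zero_mul, sK_of_zero, sK_of_zero, mul_comm]
  · have hne : √κ ≠ 0 := (Real.sqrt_pos.2 hκ).ne'
    rw [sK_of_pos hκ, sK_of_pos (mul_pos hκ hsq), Real.sqrt_mul hκ.le, Real.sqrt_sq hθ.le,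
      mul_comm x, ← mul_assoc]
    field_simp

lemma sK_mul_right (x θ : ℝ) : sK κ (x * θ) = θ * sK (κ * θ ^ 2) x := by
  rcases lt_trichotomy θ 0 with hθ | rfl | hθ
  · simpa using congrArg Neg.neg (sK_mul_right_of_pos κ (neg_pos.2 hθ) x)
  · simp
  · exact sK_mul_right_of_pos κ hθ x

variable {κ} {x ℓ : ℝ}

lemma mul_sq_le_max (hx : 0 ≤ x) (hxℓ : x ≤ ℓ) : κ * x ^ 2 ≤ max 0 (κ * ℓ ^ 2) := by
  rcases le_total κ 0 with hκ | hκ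
  · exact (mul_nonpos_of_nonpos_of_nonneg hκ (sq_nonneg x)).trans (le_max_left _ _)
  · exact (by gcongr : κ * x ^ 2 ≤ κ * ℓ ^ 2).trans (le_max_right _ _)

lemma sK_nonneg (hx : 0 ≤ x) (hκx : κ * x ^ 2 ≤ π ^ 2) : 0 ≤ sK κ x := by
  rcases lt_trichotomy κ 0 with hκ | rfl | hκ
  · rw [sK_of_neg hκ]
    exact div_nonneg (Real.sinh_nonneg_iff.2 (by positivity)) (Real.sqrt_nonneg _)
  · rwa [sK_of_zero]
  · have hπ : √κ * x ≤ π :=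
      le_of_sq_le_sq (by rwa [mul_pow, Real.sq_sqrt hκ.le]) Real.pi_pos.le
    rw [sK_of_pos hκ]
    exact div_nonneg (Real.sin_nonneg_of_nonneg_of_le_pi (by positivity) hπ) (Real.sqrt_nonneg κ)

lemma sK_pos (hx : 0 < x) (hκx : κ * x ^ 2 < π ^ 2) : 0 < sK κ x := by
  rcases lt_trichotomy κ 0 with hκ | rfl | hκ
  · have hs : 0 < √(-κ) := Real.sqrt_pos.2 (neg_pos.2 hκ)
    rw [sK_of_neg hκ]
    exact div_pos (Real.sinh_pos_iff.2 (by positivity)) hs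
  · rwa [sK_of_zero]
  · have hs : 0 < √κ := Real.sqrt_pos.2 hκ
    have hπ : √κ * x < π :=
      lt_of_pow_lt_pow_left₀ 2 Real.pi_pos.le (by rwa [mul_pow, Real.sq_sqrt hκ.le])
    rw [sK_of_pos hκ]
    exact div_pos (Real.sin_pos_of_pos_of_lt_pi (by positivity) hπ) hs

lemma eventually_sK_pos (κ : ℝ) : ∀ᶠ h in 𝓝[>] 0, 0 < sK κ h := by
  have hsmall : ∀ᶠ h in 𝓝 (0 : ℝ), κ * h ^ 2 < π ^ 2 :=
    ContinuousAt.eventually_lt (by fun_prop) (by fun_prop) (by simp [Real.pi_pos])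
  filter_upwards [self_mem_nhdsWithin, nhdsWithin_le_nhds hsmall] with h hpos hh
  exact sK_pos hpos hh

lemma sigmaR_mul_right (t θ : ℝ) (hℓ : ℓ ≠ 0) :
    sigmaR κ t (ℓ * θ) = sK (κ * θ ^ 2) (t * ℓ) / sK (κ * θ ^ 2) ℓ := by
  by_cases hκθ : κ * θ ^ 2 = 0
  · rw [sigmaR, if_pos (by rw [mul_pow, mul_left_comm, hκθ, mul_zero]), hκθ, sK_of_zero,
      sK_of_zero, mul_div_cancel_right₀ _ hℓ]
  · have hθ : θ ≠ 0 := by rintro rfl; simp at hκθ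
    have hκℓ : κ * (ℓ * θ) ^ 2 ≠ 0 := by
      rw [mul_pow, mul_left_comm]
      exact mul_ne_zero (pow_ne_zero 2 hℓ) hκθ
    rw [sigmaR, if_neg hκℓ, ← mul_assoc, sK_mul_right κ _ θ, sK_mul_right κ _ θ,
      mul_div_mul_left _ _ hθ]

end ComparisonFunctions

/-! ### Concavity relative to the comparison functions -/

/-- `u` lies on `s` above the solutions of `v'' + κ v = 0` with the same values at two points: the
`σ`-concavity `σ^{(1-t)} u(a) + σ^{(t)} u(b) ≤ u(x)` of the paper at `x = (1 - t) a + t b`,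
multiplied by `sK κ (b - a)` so that no division occurs. -/
def SConcaveOn (κ : ℝ) (s : Set ℝ) (u : ℝ → ℝ) : Prop :=
  ∀ ⦃a x b : ℝ⦄, a ∈ s → x ∈ s → b ∈ s → a ≤ x → x ≤ b →
    sK κ (b - x) * u a + sK κ (x - a) * u b ≤ sK κ (b - a) * u x

namespace SConcaveOn

variable {κ : ℝ} {s t : Set ℝ} {u v : ℝ → ℝ}

lemma mono (h : SConcaveOn κ t u) (hst : s ⊆ t) : SConcaveOn κ s u :=
  fun _ _ _ ha hx hb => h (hst ha) (hst hx) (hst hb)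

lemma congr (h : SConcaveOn κ s u) (huv : EqOn u v s) : SConcaveOn κ s v := by
  intro a x b ha hx hb hax hxb
  rw [← huv ha, ← huv hx, ← huv hb]
  exact h ha hx hb hax hxb

lemma of_tendsto {ι : Type*} {l : Filter ι} [l.NeBot] {F : ι → ℝ → ℝ}
    (hF : ∀ᶠ i in l, SConcaveOn κ s (F i))
    (hlim : ∀ x ∈ s, Tendsto (fun i => F i x) l (𝓝 (u x))) : SConcaveOn κ s u := by
  intro a x b ha hx hb hax hxb
  refine le_of_tendsto_of_tendsto
    (((hlim a ha).const_mul _).add ((hlim b hb).const_mul _)) ((hlim x hx).const_mul _) ?_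
  filter_upwards [hF] with i hi using hi ha hx hb hax hxb

lemma Icc_of_Ioo {p q : ℝ} (hpq : p < q) (hu : ContinuousOn u (Icc p q))
    (h : SConcaveOn κ (Ioo p q) u) : SConcaveOn κ (Icc p q) u := by
  intro a x b ha hx hb hax hxb
  -- the homothety of ratio `1 - ε` about the midpoint maps `Icc p q` into `Ioo p q`
  let A : ℝ → ℝ → ℝ := fun ε y => y + ε * ((p + q) / 2 - y)
  have hAmem : ∀ ε ∈ Ioo (0 : ℝ) 1, ∀ y ∈ Icc p q, A ε y ∈ Ioo p q := by
    rintro ε ⟨hε0, hε1⟩ y ⟨hpy, hyq⟩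
    simp only [A]
    constructor <;> nlinarith
  have hA : ∀ y, Tendsto (A · y) (𝓝[>] 0) (𝓝 y) := fun y =>
    ((by fun_prop : Continuous (A · y)).tendsto' 0 y (by simp [A])).mono_left nhdsWithin_le_nhds
  have hs : ∀ y z, Tendsto (fun ε => sK κ (A ε y - A ε z)) (𝓝[>] 0) (𝓝 (sK κ (y - z))) :=
    fun y z => ((continuous_sK κ).tendsto _).comp ((hA y).sub (hA z))
  have hIoo : ∀ᶠ ε in 𝓝[>] (0 : ℝ), ε ∈ Ioo (0 : ℝ) 1 := Ioo_mem_nhdsGT one_pos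
  have huA : ∀ y ∈ Icc p q, Tendsto (fun ε => u (A ε y)) (𝓝[>] 0) (𝓝 (u y)) := fun y hy =>
    (hu y hy).tendsto.comp <| tendsto_nhdsWithin_iff.2
      ⟨hA y, hIoo.mono fun ε hε => Ioo_subset_Icc_self (hAmem ε hε y hy)⟩
  refine le_of_tendsto_of_tendsto (((hs b x).mul (huA a ha)).add ((hs x a).mul (huA b hb)))
    ((hs b a).mul (huA x hx)) ?_
  have hAmono : ∀ ε ∈ Ioo (0 : ℝ) 1, Monotone (A ε) := by
    rintro ε ⟨-, hε1⟩ y z hyz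
    simp only [A]
    nlinarith
  filter_upwards [hIoo] with ε hε
  exact h (hAmem ε hε a ha) (hAmem ε hε x hx) (hAmem ε hε b hb) (hAmono ε hε hax)
    (hAmono ε hε hxb)

end SConcaveOn

section DistortionCoefficients

variable {κ θ : ℝ} {u : ℝ → ℝ}

lemma sigmaR_mul_add_le_iff {a b : ℝ} (hab : a < b) (hκ : κ * θ ^ 2 * (b - a) ^ 2 < π ^ 2)
    (t : ℝ) :
    sigmaR κ (1 - t) ((b - a) * θ) * u a + sigmaR κ t ((b - a) * θ) * u b
        ≤ u ((1 - t) * a + t * b) ↔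
      sK (κ * θ ^ 2) (b - ((1 - t) * a + t * b)) * u a
          + sK (κ * θ ^ 2) ((1 - t) * a + t * b - a) * u b
        ≤ sK (κ * θ ^ 2) (b - a) * u ((1 - t) * a + t * b) := by
  have hab' : 0 < b - a := sub_pos.2 hab
  have hpos : 0 < sK (κ * θ ^ 2) (b - a) := sK_pos hab' hκ
  rw [sigmaR_mul_right _ _ hab'.ne', sigmaR_mul_right _ _ hab'.ne', div_mul_eq_mul_div,
    div_mul_eq_mul_div, ← add_div, div_le_iff₀' hpos,
    show b - ((1 - t) * a + t * b) = (1 - t) * (b - a) by ring,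
    show (1 - t) * a + t * b - a = t * (b - a) by ring]

lemma sConcaveOn_Icc_iff_sigmaR {p q : ℝ} (hκ : κ * θ ^ 2 * (q - p) ^ 2 < π ^ 2) :
    SConcaveOn (κ * θ ^ 2) (Icc p q) u ↔
      ∀ a b : ℝ, p ≤ a → a < b → b ≤ q → ∀ t ∈ Icc (0 : ℝ) 1,
        sigmaR κ (1 - t) ((b - a) * θ) * u a + sigmaR κ t ((b - a) * θ) * u b
          ≤ u ((1 - t) * a + t * b) := by
  have hsub : ∀ {a b : ℝ}, p ≤ a → a < b → b ≤ q → κ * θ ^ 2 * (b - a) ^ 2 < π ^ 2 :=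
    fun hpa hab hbq => (mul_sq_le_max (sub_nonneg.2 hab.le) (by linarith)).trans_lt
      (max_lt (by positivity) hκ)
  constructor
  · rintro h a b hpa hab hbq t ⟨ht0, ht1⟩
    have hax : a ≤ (1 - t) * a + t * b := by nlinarith
    have hxb : (1 - t) * a + t * b ≤ b := by nlinarith
    rw [sigmaR_mul_add_le_iff hab (hsub hpa hab hbq)]
    exact h ⟨hpa, hab.le.trans hbq⟩ ⟨hpa.trans hax, hxb.trans hbq⟩ ⟨hpa.trans hab.le, hbq⟩ hax hxb
  · rintro h a x b ⟨hpa, -⟩ - ⟨-, hbq⟩ hax hxb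
    rcases (hax.trans hxb).eq_or_lt with rfl | hab
    · obtain rfl := hax.antisymm hxb
      simp
    · have hab' : 0 < b - a := sub_pos.2 hab
      have hx : (1 - (x - a) / (b - a)) * a + (x - a) / (b - a) * b = x := by field_simp; ring
      have ht : (x - a) / (b - a) ∈ Icc (0 : ℝ) 1 :=
        ⟨div_nonneg (by linarith) hab'.le, (div_le_one hab').2 (by linarith)⟩
      simpa only [hx] using
        (sigmaR_mul_add_le_iff hab (hsub hpa hab hbq) _).1 (h a b hpa hab hbq _ ht)

end DistortionCoefficients

/-! ### Comparison for twice differentiable functions -/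

section Comparison

variable {κ a b : ℝ} {w w' w'' : ℝ → ℝ}

-- the Wronskian of `w` and `sK κ (· - a)` decreases from its value `-w a` at `a`
lemma wronskian_sK_le (hκ : κ * (b - a) ^ 2 ≤ π ^ 2) (hab : a ≤ b)
    (hw : ∀ y ∈ Icc a b, HasDerivAt w (w' y) y)
    (hw' : ∀ y ∈ Icc a b, HasDerivAt w' (w'' y) y)
    (hle : ∀ y ∈ Icc a b, w'' y ≤ -κ * w y) :
    w' b * sK κ (b - a) - w b * cK κ (b - a) ≤ -w a := by
  have hderiv : ∀ y ∈ Icc a b, HasDerivAt (fun y => w' y * sK κ (y - a) - w y * cK κ (y - a))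
      ((w'' y + κ * w y) * sK κ (y - a)) y := fun y hy =>
    (((hw' y hy).mul ((hasDerivAt_sK κ (y - a)).comp_sub_const y a)).sub
      ((hw y hy).mul ((hasDerivAt_cK κ (y - a)).comp_sub_const y a))).congr_deriv (by ring)
  have hpos : ∀ y ∈ Icc a b, 0 ≤ sK κ (y - a) := fun y hy =>
    sK_nonneg (sub_nonneg.2 hy.1) <|
      (mul_sq_le_max (sub_nonneg.2 hy.1) (sub_le_sub_right hy.2 a)).trans
        (max_le (by positivity) hκ)
  have hanti : AntitoneOn (fun y => w' y * sK κ (y - a) - w y * cK κ (y - a)) (Icc a b) := by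
    refine antitoneOn_of_hasDerivWithinAt_nonpos (convex_Icc a b)
      (fun y hy => (hderiv y hy).continuousAt.continuousWithinAt)
      (fun y hy => (hderiv y (interior_subset hy)).hasDerivWithinAt) fun y hy => ?_
    have hy' := interior_subset hy
    exact mul_nonpos_of_nonpos_of_nonneg (by linarith [hle y hy']) (hpos y hy')
  simpa using hanti (left_mem_Icc.2 hab) (right_mem_Icc.2 hab) hab

lemma neg_wronskian_sK_le (hκ : κ * (b - a) ^ 2 ≤ π ^ 2) (hab : a ≤ b)
    (hw : ∀ y ∈ Icc a b, HasDerivAt w (w' y) y)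
    (hw' : ∀ y ∈ Icc a b, HasDerivAt w' (w'' y) y)
    (hle : ∀ y ∈ Icc a b, w'' y ≤ -κ * w y) :
    -w' a * sK κ (b - a) - w a * cK κ (b - a) ≤ -w b := by
  have hmem : ∀ y ∈ Icc (-b) (-a), -y ∈ Icc a b := fun y hy =>
    ⟨le_neg_of_le_neg hy.2, neg_le_of_neg_le hy.1⟩
  have hreflect := wronskian_sK_le (κ := κ) (a := -b) (b := -a) (w := fun y => w (-y))
    (w' := fun y => -w' (-y)) (w'' := fun y => w'' (-y))
    (by rwa [neg_sub_neg]) (neg_le_neg hab)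
    (fun y hy => ((hw _ (hmem y hy)).comp y (hasDerivAt_neg y)).congr_deriv (by ring))
    (fun y hy => ((hw' _ (hmem y hy)).comp y (hasDerivAt_neg y)).neg.congr_deriv (by ring))
    (fun y hy => hle _ (hmem y hy))
  simpa only [neg_neg, neg_sub_neg] using hreflect

lemma sConcaveOn_of_hasDerivAt2_le (hκ : κ * (b - a) ^ 2 ≤ π ^ 2)
    (hw : ∀ y ∈ Icc a b, HasDerivAt w (w' y) y)
    (hw' : ∀ y ∈ Icc a b, HasDerivAt w' (w'' y) y)
    (hle : ∀ y ∈ Icc a b, w'' y ≤ -κ * w y) : SConcaveOn κ (Icc a b) w := by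
  intro c x d hc hx hd hcx hxd
  have hsub : ∀ {y}, 0 ≤ y → y ≤ b - a → κ * y ^ 2 ≤ π ^ 2 := fun hy0 hy =>
    (mul_sq_le_max hy0 hy).trans (max_le (by positivity) hκ)
  have hxc0 : 0 ≤ x - c := sub_nonneg.2 hcx
  have hdx0 : 0 ≤ d - x := sub_nonneg.2 hxd
  have hκxc : κ * (x - c) ^ 2 ≤ π ^ 2 := hsub hxc0 (by linarith [hc.1, hx.2])
  have hκdx : κ * (d - x) ^ 2 ≤ π ^ 2 := hsub hdx0 (by linarith [hx.1, hd.2])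
  have hleft : w' x * sK κ (x - c) - w x * cK κ (x - c) ≤ -w c := by
    have hss : Icc c x ⊆ Icc a b := Icc_subset_Icc hc.1 hx.2
    exact wronskian_sK_le hκxc hcx (fun y hy => hw y (hss hy)) (fun y hy => hw' y (hss hy))
      (fun y hy => hle y (hss hy))
  have hright : -w' x * sK κ (d - x) - w x * cK κ (d - x) ≤ -w d := by
    have hss : Icc x d ⊆ Icc a b := Icc_subset_Icc hx.1 hd.2
    exact neg_wronskian_sK_le hκdx hxd (fun y hy => hw y (hss hy)) (fun y hy => hw' y (hss hy))
      (fun y hy => hle y (hss hy))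
  have hadd : sK κ (d - c) = sK κ (d - x) * cK κ (x - c) + cK κ (d - x) * sK κ (x - c) := by
    rw [← sK_add, sub_add_sub_cancel]
  rw [hadd]
  linarith [mul_le_mul_of_nonneg_left hleft (sK_nonneg hdx0 hκdx),
    mul_le_mul_of_nonneg_left hright (sK_nonneg hxc0 hκxc)]

end Comparison

/-! ### Second difference quotients -/

/-- The symmetric second difference quotient of `f` at `x` with step `h`, a discrete second
derivative. -/
noncomputable def secondDiffQuot (f : ℝ → ℝ) (h x : ℝ) : ℝ :=
  (f (x + h) + f (x - h) - 2 * f x) / h ^ 2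

section SecondDiffQuot

variable {f f' f'' : ℝ → ℝ} {x h M : ℝ}

lemma secondDiffQuot_le (hf : ∀ y, HasDerivAt f (f' y) y) (hf' : ∀ y, HasDerivAt f' (f'' y) y)
    (hh : 0 < h) (hM : ∀ y ∈ Icc (x - h) (x + h), f'' y ≤ M) : secondDiffQuot f h x ≤ M := by
  have hconcave : ConcaveOn ℝ (Icc (x - h) (x + h)) fun y => f y - M / 2 * y ^ 2 := by
    have h1 : ∀ y, HasDerivAt (fun y => f y - M / 2 * y ^ 2) (f' y - M * y) y := fun y =>
      ((hf y).sub ((hasDerivAt_pow 2 y).const_mul (M / 2))).congr_deriv (by push_cast; ring)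
    have h2 : ∀ y, HasDerivAt (fun y => f' y - M * y) (f'' y - M) y := fun y =>
      ((hf' y).sub ((hasDerivAt_id' y).const_mul M)).congr_deriv (by ring)
    exact concaveOn_of_hasDerivWithinAt2_nonpos (convex_Icc _ _)
      (fun y _ => (h1 y).continuousAt.continuousWithinAt)
      (fun y _ => (h1 y).hasDerivWithinAt) (fun y _ => (h2 y).hasDerivWithinAt)
      (fun y hy => sub_nonpos.2 (hM y (interior_subset hy)))
  have hmid := hconcave.2 (left_mem_Icc.2 (by linarith)) (right_mem_Icc.2 (by linarith))
    (one_half_pos (α := ℝ)).le one_half_pos.le (add_halves 1)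
  simp only [smul_eq_mul] at hmid
  rw [show 1 / 2 * (x - h) + 1 / 2 * (x + h) = x by ring] at hmid
  rw [secondDiffQuot, div_le_iff₀ (by positivity)]
  nlinarith

lemma le_secondDiffQuot (hf : ∀ y, HasDerivAt f (f' y) y) (hf' : ∀ y, HasDerivAt f' (f'' y) y)
    (hh : 0 < h) (hM : ∀ y ∈ Icc (x - h) (x + h), M ≤ f'' y) : M ≤ secondDiffQuot f h x := by
  have hneg := secondDiffQuot_le (fun y => (hf y).neg) (fun y => (hf' y).neg) hh
    (fun y hy => neg_le_neg (hM y hy))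
  have hquot : secondDiffQuot (-f) h x = -secondDiffQuot f h x := by
    simp only [secondDiffQuot, Pi.neg_apply]; ring
  rwa [hquot, neg_le_neg_iff] at hneg

lemma tendsto_secondDiffQuot (hf : ∀ y, HasDerivAt f (f' y) y)
    (hf' : ∀ y, HasDerivAt f' (f'' y) y) (hf'' : ContinuousAt f'' x) :
    Tendsto (fun h => secondDiffQuot f h x) (𝓝[>] 0) (𝓝 (f'' x)) := by
  rw [Metric.tendsto_nhds]
  intro ε hε
  obtain ⟨δ, hδ, hclose⟩ := Metric.continuousAt_iff.1 hf'' (ε / 2) (half_pos hε)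
  filter_upwards [Ioo_mem_nhdsGT hδ] with h ⟨hh, hhδ⟩
  have hbound : ∀ y ∈ Icc (x - h) (x + h), |f'' y - f'' x| < ε / 2 := fun y hy =>
    hclose (abs_lt.2 ⟨by linarith [hy.1], by linarith [hy.2]⟩)
  have hupper : secondDiffQuot f h x ≤ f'' x + ε / 2 :=
    secondDiffQuot_le hf hf' hh fun y hy => by linarith [(abs_lt.1 (hbound y hy)).2]
  have hlower : f'' x - ε / 2 ≤ secondDiffQuot f h x :=
    le_secondDiffQuot hf hf' hh fun y hy => by linarith [(abs_lt.1 (hbound y hy)).1]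
  rw [Real.dist_eq, abs_lt]
  constructor <;> linarith

lemma tendsto_secondDiffQuot_cK (κ : ℝ) :
    Tendsto (fun h => secondDiffQuot (cK κ) h 0) (𝓝[>] 0) (𝓝 (-κ)) := by
  have hcont : Continuous fun y => -κ * cK κ y := by fun_prop
  simpa using tendsto_secondDiffQuot (hasDerivAt_cK κ)
    (fun y => (hasDerivAt_sK κ y).const_mul (-κ)) (hcont.continuousAt (x := 0))

lemma SConcaveOn.secondDiffQuot_le {κ : ℝ} {s : Set ℝ} {u : ℝ → ℝ} (hu : SConcaveOn κ s u)
    (hh : 0 < h) (hsh : 0 < sK κ h) (hl : x - h ∈ s) (hx : x ∈ s) (hr : x + h ∈ s) :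
    secondDiffQuot u h x ≤ secondDiffQuot (cK κ) h 0 * u x := by
  have hmid : u (x + h) + u (x - h) ≤ 2 * cK κ h * u x := by
    have := hu hl hx hr (by linarith) (by linarith)
    rw [add_sub_cancel_left, sub_sub_cancel, show x + h - (x - h) = h + h by ring, sK_add] at this
    refine le_of_mul_le_mul_left ?_ hsh
    linarith
  simp only [secondDiffQuot, zero_add, zero_sub, cK_neg_right, cK_zero_right]
  rw [div_mul_eq_mul_div]
  gcongr
  linarith

end SecondDiffQuot

section TestFunctions

variable {φ u : ℝ → ℝ}

lemma hasDerivAt_deriv_of_contDiff_two (hφ : ContDiff ℝ 2 φ) (x : ℝ) :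
    HasDerivAt φ (deriv φ x) x :=
  (hφ.differentiable two_ne_zero x).hasDerivAt

lemma contDiff_one_deriv (hφ : ContDiff ℝ 2 φ) : ContDiff ℝ 1 (deriv φ) :=
  ((contDiff_succ_iff_deriv (n := 1)).1 (by simpa [one_add_one_eq_two] using hφ)).2.2

lemma hasDerivAt_deriv_deriv (hφ : ContDiff ℝ 2 φ) (x : ℝ) :
    HasDerivAt (deriv φ) (deriv (deriv φ) x) x :=
  ((contDiff_one_deriv hφ).differentiable one_ne_zero x).hasDerivAt

lemma continuous_deriv_deriv (hφ : ContDiff ℝ 2 φ) : Continuous (deriv (deriv φ)) :=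
  (contDiff_one_deriv hφ).continuous_deriv le_rfl

lemma integral_mul_secondDiffQuot (hu : LocallyIntegrable u) (hφ : Continuous φ)
    (hφc : HasCompactSupport φ) (h : ℝ) :
    ∫ x, u x * secondDiffQuot φ h x = ∫ x, secondDiffQuot u h x * φ x := by
  have hint : ∀ t, Integrable fun x => u x * φ (x + t) := fun t =>
    hu.integrable_smul_right_of_hasCompactSupport (by fun_prop)
      (hφc.comp_homeomorph (Homeomorph.addRight t))
  have hshift : ∀ t, ∫ x, u x * φ (x + t) = ∫ x, u (x - t) * φ x := fun t => by
    simpa using integral_add_right_eq_self (μ := volume) (fun x => u (x - t) * φ x) t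
  have hint' : ∀ t, Integrable fun x => u (x - t) * φ x := fun t => by
    simpa using (hint t).comp_sub_right t
  have hlin : ∀ {f g k : ℝ → ℝ}, Integrable f → Integrable g → Integrable k →
      ∫ x, (f x + g x - 2 * k x) / h ^ 2 =
        ((∫ x, f x) + (∫ x, g x) - 2 * ∫ x, k x) / h ^ 2 := by
    intro f g k hf hg hk
    have hfg : Integrable fun x => f x + g x := hf.add hg
    rw [integral_div, integral_sub hfg (hk.const_mul 2), integral_add hf hg, integral_const_mul]
  calc ∫ x, u x * secondDiffQuot φ h x
      = ∫ x, (u x * φ (x + h) + u x * φ (x + -h) - 2 * (u x * φ (x + 0))) / h ^ 2 := by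
        congr with x
        rw [secondDiffQuot, add_zero, ← sub_eq_add_neg]
        ring
    _ = ∫ x, (u (x - h) * φ x + u (x - -h) * φ x - 2 * (u (x - 0) * φ x)) / h ^ 2 := by
        rw [hlin (hint h) (hint (-h)) (hint 0), hlin (hint' h) (hint' (-h)) (hint' 0)]
        simp only [hshift]
    _ = ∫ x, secondDiffQuot u h x * φ x := by
        congr with x
        rw [secondDiffQuot, sub_zero, sub_neg_eq_add]
        ring

lemma integrable_secondDiffQuot (hu : Integrable u) (h : ℝ) : Integrable (secondDiffQuot u h) :=
  (((hu.comp_add_right h).add (hu.comp_sub_right h)).sub (hu.const_mul 2)).div_const (h ^ 2)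

lemma secondDiffQuot_eq_zero_of_notMem_cthickening {h r x : ℝ} (hh : 0 ≤ h) (hr : h ≤ r)
    (hx : x ∉ Metric.cthickening r (tsupport φ)) : secondDiffQuot φ h x = 0 := by
  have hzero : ∀ y, |x - y| ≤ r → φ y = 0 := fun y hy =>
    image_eq_zero_of_notMem_tsupport fun hmem =>
      hx (Metric.mem_cthickening_of_dist_le x y r _ hmem hy)
  have hhr : |h| ≤ r := by rwa [abs_of_nonneg hh]
  rw [secondDiffQuot, hzero x (by simpa using hh.trans hr), hzero (x + h) (by simpa using hhr),
    hzero (x - h) (by simpa using hhr)]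
  simp

lemma tendsto_integral_mul_secondDiffQuot (hu : LocallyIntegrable u) (hφ : ContDiff ℝ 2 φ)
    (hφc : HasCompactSupport φ) :
    Tendsto (fun h => ∫ x, u x * secondDiffQuot φ h x) (𝓝[>] 0)
      (𝓝 (∫ x, u x * deriv (deriv φ) x)) := by
  obtain ⟨M, hM⟩ :=
    (continuous_deriv_deriv hφ).bounded_above_of_compact_support hφc.deriv.deriv
  have hM' : ∀ y, |deriv (deriv φ) y| ≤ M := hM
  let T := Metric.cthickening 1 (tsupport φ)
  refine tendsto_integral_filter_of_dominated_convergence (T.indicator fun x => |u x| * M)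
    (Eventually.of_forall fun h => ?_) ?_ ?_ ?_
  · have hcont : Continuous (secondDiffQuot φ h) := by
      have := hφ.continuous
      unfold secondDiffQuot
      fun_prop
    exact hu.aestronglyMeasurable.mul hcont.aestronglyMeasurable
  · filter_upwards [Ioo_mem_nhdsGT one_pos] with h ⟨hh, hh1⟩
    refine Eventually.of_forall fun x => ?_
    by_cases hx : x ∈ T
    · rw [indicator_of_mem hx, norm_mul]
      refine mul_le_mul_of_nonneg_left (abs_le.2 ⟨?_, ?_⟩) (norm_nonneg _)
      · exact le_secondDiffQuot (hasDerivAt_deriv_of_contDiff_two hφ) (hasDerivAt_deriv_deriv hφ)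
          hh fun y _ => (abs_le.1 (hM' y)).1
      · exact secondDiffQuot_le (hasDerivAt_deriv_of_contDiff_two hφ) (hasDerivAt_deriv_deriv hφ)
          hh fun y _ => (abs_le.1 (hM' y)).2
    · rw [indicator_of_notMem hx,
        secondDiffQuot_eq_zero_of_notMem_cthickening hh.le hh1.le hx, mul_zero, norm_zero]
  · have hT : IsCompact T := IsCompact.cthickening hφc
    exact (integrable_indicator_iff hT.measurableSet).2
      ((hu.integrableOn_isCompact hT).norm.mul_const M)
  · exact Eventually.of_forall fun x =>
      (tendsto_secondDiffQuot (hasDerivAt_deriv_of_contDiff_two hφ) (hasDerivAt_deriv_deriv hφ)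
        (continuous_deriv_deriv hφ).continuousAt).const_mul (u x)

lemma SConcaveOn.eventually_secondDiffQuot_mul_le {κ : ℝ} {Ω : Set ℝ} (hu : SConcaveOn κ Ω u)
    (hΩ : IsOpen Ω) (hφc : HasCompactSupport φ) (hφΩ : tsupport φ ⊆ Ω) (hφ0 : ∀ x, 0 ≤ φ x) :
    ∀ᶠ h in 𝓝[>] 0, ∀ x, secondDiffQuot u h x * φ x ≤
      secondDiffQuot (cK κ) h 0 * (u x * φ x) := by
  obtain ⟨δ, hδ, hδΩ⟩ := hφc.isCompact.exists_cthickening_subset_open hΩ hφΩ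
  filter_upwards [Ioo_mem_nhdsGT hδ, eventually_sK_pos κ] with h ⟨hh, hhδ⟩ hsh x
  by_cases hx : φ x = 0
  · simp [hx]
  · have hmem : ∀ y, |y - x| ≤ δ → y ∈ Ω := fun y hxy =>
      hδΩ (Metric.mem_cthickening_of_dist_le y x δ _ (subset_tsupport φ hx) hxy)
    have hhδ' : |h| ≤ δ := by rw [abs_of_pos hh]; exact hhδ.le
    rw [← mul_assoc]
    exact mul_le_mul_of_nonneg_right (hu.secondDiffQuot_le hh hsh
      (hmem _ (by simpa using hhδ')) (hmem _ (by simpa using hδ.le))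
      (hmem _ (by simpa using hhδ'))) (hφ0 x)

end TestFunctions

/-! ### The distributional inequality -/

/-- The inequality `u'' ≤ -κ u` on `Ω` in the sense of distributions, tested against nonnegative
compactly supported `C²` functions. -/
def IsWeakSupersolution (κ : ℝ) (Ω : Set ℝ) (u : ℝ → ℝ) : Prop :=
  ∀ φ : ℝ → ℝ, ContDiff ℝ 2 φ → HasCompactSupport φ → tsupport φ ⊆ Ω → (∀ x, 0 ≤ φ x) →
    ∫ x in Ω, u x * deriv (deriv φ) x ≤ ∫ x in Ω, -κ * u x * φ x

section WeakSupersolution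

variable {κ : ℝ} {Ω : Set ℝ} {u : ℝ → ℝ}

lemma isWeakSupersolution_iff_indicator (hΩ : MeasurableSet Ω) :
    IsWeakSupersolution κ Ω u ↔
      ∀ φ : ℝ → ℝ, ContDiff ℝ 2 φ → HasCompactSupport φ → tsupport φ ⊆ Ω → (∀ x, 0 ≤ φ x) →
        ∫ x, Ω.indicator u x * deriv (deriv φ) x ≤ -κ * ∫ x, Ω.indicator u x * φ x := by
  simp only [IsWeakSupersolution, mul_assoc, integral_const_mul, ← indicator_mul_left,
    integral_indicator hΩ]

lemma SConcaveOn.isWeakSupersolution (hu : SConcaveOn κ Ω u) (hΩ : IsOpen Ω)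
    (hint : IntegrableOn u Ω) : IsWeakSupersolution κ Ω u := by
  rw [isWeakSupersolution_iff_indicator hΩ.measurableSet]
  intro φ hφ hφc hφΩ hφ0
  set v := Ω.indicator u
  have hv : Integrable v := hint.integrable_indicator hΩ.measurableSet
  have hvs : SConcaveOn κ Ω v := hu.congr fun y hy => (indicator_of_mem hy u).symm
  have hmulφ : ∀ {g : ℝ → ℝ}, Integrable g → Integrable fun x => g x * φ x := fun hg =>
    hg.locallyIntegrable.integrable_smul_right_of_hasCompactSupport hφ.continuous hφc
  refine le_of_tendsto_of_tendsto (tendsto_integral_mul_secondDiffQuot hv.locallyIntegrable hφ hφc)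
    ((tendsto_secondDiffQuot_cK κ).mul_const (∫ x, v x * φ x)) ?_
  filter_upwards [hvs.eventually_secondDiffQuot_mul_le hΩ hφc hφΩ hφ0] with h hle
  rw [integral_mul_secondDiffQuot hv.locallyIntegrable hφ.continuous hφc, ← integral_const_mul]
  exact integral_mono (hmulφ (integrable_secondDiffQuot hv h)) ((hmulφ hv).const_mul _) hle

lemma IsWeakSupersolution.convolution_le {ρ : ℝ → ℝ} {y : ℝ} (h : IsWeakSupersolution κ Ω u)
    (hΩ : MeasurableSet Ω) (hρ : ContDiff ℝ 2 ρ) (hρc : HasCompactSupport ρ)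
    (hρ0 : ∀ x, 0 ≤ ρ x) (hy : ∀ z ∈ tsupport ρ, y - z ∈ Ω) :
    (deriv (deriv ρ) ⋆[ContinuousLinearMap.lsmul ℝ ℝ] Ω.indicator u) y ≤
      -κ * (ρ ⋆[ContinuousLinearMap.lsmul ℝ ℝ] Ω.indicator u) y := by
  have hderiv2 : deriv (deriv fun x => ρ (y - x)) = fun x => deriv (deriv ρ) (y - x) := by
    ext x
    have h1 : (deriv fun x => ρ (y - x)) = fun x => -deriv ρ (y - x) :=
      funext fun x => deriv_comp_const_sub ρ y x
    rw [h1, deriv.fun_neg, deriv_comp_const_sub (deriv ρ) y x, neg_neg]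
  have hsupp : tsupport (fun x => ρ (y - x)) ⊆ Ω := fun x hx => by
    have hx' : y - x ∈ tsupport ρ := by
      rwa [← Homeomorph.subLeft_apply y x, ← mem_preimage,
        ← tsupport_comp_eq_preimage ρ (Homeomorph.subLeft y)]
    simpa using hy _ hx'
  have key := (isWeakSupersolution_iff_indicator hΩ).1 h (fun x => ρ (y - x)) (by fun_prop)
    (hρc.comp_homeomorph (Homeomorph.subLeft y)) hsupp (fun x => hρ0 _)
  rw [hderiv2] at key
  simpa only [convolution_lsmul_swap, smul_eq_mul, mul_comm] using key

lemma IsWeakSupersolution.sConcaveOn_convolution {ρ : ℝ → ℝ} {a b : ℝ}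
    (h : IsWeakSupersolution κ Ω u) (hκ : κ * (b - a) ^ 2 ≤ π ^ 2) (hΩ : MeasurableSet Ω)
    (hint : IntegrableOn u Ω) (hρ : ContDiff ℝ 2 ρ) (hρc : HasCompactSupport ρ)
    (hρ0 : ∀ x, 0 ≤ ρ x) (hmem : ∀ y ∈ Icc a b, ∀ z ∈ tsupport ρ, y - z ∈ Ω) :
    SConcaveOn κ (Icc a b) (ρ ⋆[ContinuousLinearMap.lsmul ℝ ℝ] Ω.indicator u) := by
  have hv : LocallyIntegrable (Ω.indicator u) :=
    (hint.integrable_indicator hΩ).locallyIntegrable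
  exact sConcaveOn_of_hasDerivAt2_le hκ
    (fun y _ => hρc.hasDerivAt_convolution_left _ (hρ.of_le one_le_two) hv y)
    (fun y _ => hρc.deriv.hasDerivAt_convolution_left _ (contDiff_one_deriv hρ) hv y)
    (fun y hy => h.convolution_le hΩ hρ hρc hρ0 (hmem y hy))

lemma IsWeakSupersolution.sConcaveOn_Icc {a b : ℝ} (h : IsWeakSupersolution κ Ω u)
    (hκ : κ * (b - a) ^ 2 ≤ π ^ 2) (hΩ : IsOpen Ω) (hab : Icc a b ⊆ Ω)
    (hint : IntegrableOn u Ω) (hu : ContinuousOn u Ω) : SConcaveOn κ (Icc a b) u := by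
  let ρ : ℕ → ContDiffBump (0 : ℝ) := fun n =>
    { rIn := 1 / (n + 1) / 2
      rOut := 1 / (n + 1)
      rIn_pos := by positivity
      rIn_lt_rOut := half_lt_self (by positivity) }
  have hρ : Tendsto (fun n => (ρ n).rOut) atTop (𝓝 0) := tendsto_one_div_add_atTop_nhds_zero_nat
  obtain ⟨δ, hδ, hδΩ⟩ := isCompact_Icc.exists_cthickening_subset_open hΩ hab
  refine SConcaveOn.of_tendsto (l := atTop) (F := fun n =>
    (ρ n).normed volume ⋆[ContinuousLinearMap.lsmul ℝ ℝ] Ω.indicator u) ?_ fun y hy => ?_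
  · filter_upwards [hρ.eventually_le_const hδ] with n hn
    refine h.sConcaveOn_convolution hκ hΩ.measurableSet hint (ρ n).contDiff_normed
      (ρ n).hasCompactSupport_normed (ρ n).nonneg_normed fun y hy z hz => ?_
    rw [ContDiffBump.tsupport_normed_eq, mem_closedBall_zero_iff] at hz
    exact hδΩ (Metric.mem_cthickening_of_dist_le (y - z) y δ _ hy (by simpa using hz.trans hn))
  · have heq : Ω.indicator u =ᶠ[𝓝 y] u :=
      eventuallyEq_of_mem (hΩ.mem_nhds (hab hy)) eqOn_indicator
    have hlim : Tendsto (Ω.indicator u) (𝓝 y) (𝓝 (u y)) :=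
      (hu.continuousAt (hΩ.mem_nhds (hab hy))).congr' heq.symm
    exact ContDiffBump.convolution_tendsto_right hρ
      (Eventually.of_forall fun _ => (hint.integrable_indicator hΩ.measurableSet).1)
      (hlim.comp tendsto_snd) tendsto_const_nhds

theorem isWeakSupersolution_Ioo_iff_sConcaveOn_Icc {p q : ℝ} (hpq : p < q)
    (hκ : κ * (q - p) ^ 2 ≤ π ^ 2) (hu : ContinuousOn u (Icc p q)) :
    IsWeakSupersolution κ (Ioo p q) u ↔ SConcaveOn κ (Icc p q) u := by
  have hint : IntegrableOn u (Ioo p q) := hu.integrableOn_Icc.mono_set Ioo_subset_Icc_self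
  refine ⟨fun h => SConcaveOn.Icc_of_Ioo hpq hu ?_, fun h =>
    (h.mono Ioo_subset_Icc_self).isWeakSupersolution isOpen_Ioo hint⟩
  rintro a x b ha - hb hax hxb
  have hκab : κ * (b - a) ^ 2 ≤ π ^ 2 :=
    (mul_sq_le_max (by linarith) (by linarith [ha.1, hb.2])).trans (max_le (by positivity) hκ)
  exact h.sConcaveOn_Icc hκab isOpen_Ioo (Icc_subset_Ioo ha.1 hb.2) hint
    (hu.mono Ioo_subset_Icc_self) ⟨le_rfl, hax.trans hxb⟩ ⟨hax, hxb⟩ ⟨hax.trans hxb, le_rfl⟩ hax hxb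

end WeakSupersolution

theorem stmt_14_general {u : ℝ → ℝ} {κ θ p q : ℝ} (hpq : p < q)
    (hκ : κ * θ ^ 2 * (q - p) ^ 2 < π ^ 2) (hcont : ContinuousOn u (Icc p q)) :
    (∀ φ : ℝ → ℝ, ContDiff ℝ 2 φ → HasCompactSupport φ → tsupport φ ⊆ Ioo p q →
        (∀ x, 0 ≤ φ x) →
        ∫ x in p..q, u x * deriv (deriv φ) x ≤ ∫ x in p..q, -κ * θ ^ 2 * u x * φ x) ↔
      ∀ a b : ℝ, p ≤ a → a < b → b ≤ q → ∀ t ∈ Icc (0 : ℝ) 1,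
        sigmaR κ (1 - t) ((b - a) * θ) * u a + sigmaR κ t ((b - a) * θ) * u b
          ≤ u ((1 - t) * a + t * b) := by
  rw [← sConcaveOn_Icc_iff_sigmaR hκ, ← isWeakSupersolution_Ioo_iff_sConcaveOn_Icc hpq hκ.le hcont]
  simp only [IsWeakSupersolution, intervalIntegral.integral_of_le hpq.le,
    integral_Ioc_eq_integral_Ioo, neg_mul]

/-- A nonnegative semi-convex `u` on `[0,1]` satisfies the distributional inequality
`u'' ≤ −(K/N)θ²u` if and only if it satisfies the integrated `σ`-concavity inequality on every
subinterval of `[0,1]` (with coefficient scaled by the length of the subinterval). -/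
theorem stmt_14 (u : ℝ → ℝ) (K N θ : ℝ) (hN : 0 < N) (hθ : 0 ≤ θ)
    (hdom : 0 < K → K / N * θ ^ 2 < Real.pi ^ 2)
    (hcont : ContinuousOn u (Set.Icc 0 1))
    (hnn : ∀ t ∈ Set.Icc (0 : ℝ) 1, 0 ≤ u t)
    (hsc : ∃ C : ℝ, ConvexOn ℝ (Set.Icc 0 1) fun x => u x + C * x ^ 2) :
    ((∀ φ : ℝ → ℝ, ContDiff ℝ 2 φ → HasCompactSupport φ → tsupport φ ⊆ Set.Ioo 0 1 →
        (∀ x, 0 ≤ φ x) →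
        ∫ x in (0 : ℝ)..1, u x * deriv (deriv φ) x ≤
          ∫ x in (0 : ℝ)..1, -(K / N) * θ ^ 2 * u x * φ x)
      ↔
      (∀ a b : ℝ, 0 ≤ a → a < b → b ≤ 1 → ∀ t ∈ Set.Icc (0 : ℝ) 1,
        sigmaR (K / N) (1 - t) ((b - a) * θ) * u a + sigmaR (K / N) t ((b - a) * θ) * u b
          ≤ u ((1 - t) * a + t * b))) := by
  have hκ : K / N * θ ^ 2 < π ^ 2 := by
    rcases lt_or_ge 0 K with hK | hK
    · exact hdom hK
    · exact (mul_nonpos_of_nonpos_of_nonneg (div_nonpos_of_nonpos_of_nonneg hK hN.le)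
        (sq_nonneg θ)).trans_lt (by positivity)
  exact stmt_14_general one_pos (by simpa using hκ) hcont
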